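/- Fix β > 0 and δ ∈ (0,1). Define V_β(s,t,x) := −β t s − (1−s) x² / (2 s t) for s ∈ (0,1], and s*(t,x) := min{ x/(√(2β) t), 1 }. Then, uniformly over (t,x) ∈ [δ,2]×[δ, δ^{-1}], lim_{λ→∞} λ^{-1} log ∫_0^1 ( λ x² / (2π t s³ (1−s)) )^{1/2} exp( λ V_β(s,t,x) ) ds = V_β( s*(t,x), t, x ); that is, for every ζ > 0 there exists M such that for all λ > M and all (t,x) ∈ [δ,2]×[δ, δ^{-1}], the quantity λ^{-1} log of the integral differs from V_β(s*(t,x), t, x) by less than ζ. -/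

import Mathlib

/-!
Write `s* = min (x / (√(2β) t)) 1`. The proof gives explicit bounds
`|l⁻¹ log I - V(s*)| ≤ (K + log l) / l` for large `l`, with `K` depending only on `β` and `δ`.

Everything about `V` comes from the identity
`V(u) - V(s) = (s - u) (β t - x² / (2 t s u))` (`Vfun_sub`): it shows that `s*` maximises `V`
(`Vfun_le_max`) and that `V` is Lipschitz on the left of `s*`.

*Upper bound.* The prefactor is not integrable at `s = 0`, so one power of `exp V` is kept aside:
`exp (l V) = exp ((l - 1) V) exp V ≤ exp ((l - 1) V(s*)) exp V`. The factor `exp V` absorbs the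
singularity at `0`, leaving `√l` times a constant times the integrable function `(1 - s)^(-1/2)`
(`prefactor_bound`).

*Lower bound.* On the interval `(s* - h/l, s*)` the prefactor is at least `1` for large `l` and
`V ≥ V(s*) - L h / l`, so `I ≥ (h / l) exp (l V(s*) - L h)`.
-/

open MeasureTheory Real Filter

/-- `V_β(s,t,x) = −βts − (1−s)x²/(2st)`. -/
noncomputable def Vfun (β s t x : ℝ) : ℝ := -β * t * s - (1 - s) * x ^ 2 / (2 * s * t)

lemma Vfun_sub (β s u t x : ℝ) (hs : 0 < s) (hu : 0 < u) (ht : 0 < t) :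
    Vfun β u t x - Vfun β s t x = (s - u) * (β * t - x ^ 2 / (2 * t * s * u)) := by
  unfold Vfun
  field_simp
  ring

lemma Vfun_le_max (β s t x : ℝ) (hβ : 0 < β) (hs : 0 < s) (hs1 : s ≤ 1) (ht : 0 < t)
    (hx : 0 < x) :
    Vfun β s t x ≤ Vfun β (min (x / (√(2 * β) * t)) 1) t x := by
  have ha : 0 < √(2 * β) := by positivity
  have ha2 : √(2 * β) ^ 2 = 2 * β := Real.sq_sqrt (by positivity)
  set a := √(2 * β)
  set r := x / (a * t) with hr
  have hr0 : 0 < r := by positivity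
  have hu0 : 0 < min r 1 := lt_min hr0 one_pos
  -- `r` is the unconstrained critical point: `β t = x² / (2 t r²)`.
  have hcrit : β * t = x ^ 2 / (2 * t * r * r) := by
    have : x = r * (a * t) := by rw [hr]; field_simp
    rw [eq_div_iff (by positivity), this]
    linear_combination (-(t ^ 2 * r ^ 2)) * ha2
  have key := Vfun_sub β s (min r 1) t x hs hu0 ht
  have hur : min r 1 ≤ r := min_le_left _ _
  rcases le_total s (min r 1) with h | h
  · have : x ^ 2 / (2 * t * r * r) ≤ x ^ 2 / (2 * t * s * min r 1) := by
      have : s ≤ r := h.trans hur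
      gcongr
    nlinarith
  · rcases le_total r 1 with h1 | h1
    · rw [min_eq_left h1] at *
      have : x ^ 2 / (2 * t * s * r) ≤ x ^ 2 / (2 * t * r * r) := by gcongr
      nlinarith
    · rw [min_eq_right h1] at *
      have : s = 1 := le_antisymm hs1 h
      rw [this]

/-- One factor `exp V` compensates the `s^(-3/2)` singularity of the density, since
`exp (-c / s) ≤ 2 s² / c²`; only the integrable singularity at `s = 1` remains. -/
lemma prefactor_bound (β δ : ℝ) (hβ : 0 < β) (hδ : 0 < δ) :
    ∃ C > 0, ∀ l > 0, ∀ t x s : ℝ, t ∈ Set.Icc δ 2 → x ∈ Set.Icc δ δ⁻¹ →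
      s ∈ Set.Ioo (0 : ℝ) 1 →
      √(l * x ^ 2 / (2 * π * t * s ^ 3 * (1 - s))) * exp (Vfun β s t x)
        ≤ C * √l * (√(1 - s))⁻¹ := by
  set c := δ ^ 2 / 4 with hc
  have hc0 : 0 < c := by positivity
  refine ⟨√(δ⁻¹ ^ 3) * (exp c * 2 / c ^ 2), by positivity, ?_⟩
  rintro l hl t x s ⟨ht, ht2⟩ ⟨hx, hx2⟩ ⟨hs, hs1⟩
  have ht0 : 0 < t := hδ.trans_le ht
  have hx0 : 0 < x := hδ.trans_le hx
  have h1s : 0 < 1 - s := by linarith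
  have hA : √(l * x ^ 2 / (2 * π * t * s ^ 3 * (1 - s)))
      ≤ √(δ⁻¹ ^ 3) * √l * (s ^ 2)⁻¹ * (√(1 - s))⁻¹ := by
    have e : √(δ⁻¹ ^ 3) * √l * (s ^ 2)⁻¹ * (√(1 - s))⁻¹
        = √(l * δ⁻¹ ^ 2 / (1 * δ * (s ^ 2) ^ 2 * (1 - s))) := by
      rw [← Real.sqrt_inv, ← Real.sqrt_mul (by positivity),
        ← Real.sqrt_sq (show 0 ≤ (s ^ 2)⁻¹ by positivity),
        ← Real.sqrt_mul (by positivity), ← Real.sqrt_mul (by positivity)]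
      congr 1
      field_simp
    rw [e]
    apply Real.sqrt_le_sqrt
    have h4 : (s ^ 2) ^ 2 ≤ s ^ 3 := by
      nlinarith [pow_pos hs 3]
    have hpi : 1 ≤ 2 * π := by linarith [Real.pi_gt_three]
    gcongr
  have hB : exp (Vfun β s t x) ≤ exp c * 2 / c ^ 2 * s ^ 2 := by
    have h1 : Vfun β s t x ≤ c - c / s := by
      have : c * (1 - s) / s ≤ (1 - s) * x ^ 2 / (2 * s * t) := by
        rw [div_le_div_iff₀ hs (by positivity)]
        have : c * (2 * t) ≤ x ^ 2 := by
          rw [hc]; nlinarith [mul_nonneg (sq_nonneg δ) (by linarith : 0 ≤ 2 - t)]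
        nlinarith [mul_le_mul_of_nonneg_left this (by positivity : 0 ≤ (1 - s) * s)]
      have h2 : c * (1 - s) / s = c / s - c := by field_simp
      have : 0 < β * t * s := by positivity
      unfold Vfun
      linarith
    have h3 : (c / s) ^ 2 / 2 ≤ exp (c / s) := by
      have := Real.quadratic_le_exp_of_nonneg (show 0 ≤ c / s by positivity)
      have : 0 < c / s := by positivity
      linarith
    calc exp (Vfun β s t x) ≤ exp (c - c / s) := exp_le_exp.2 h1
      _ = exp c / exp (c / s) := exp_sub _ _
      _ ≤ exp c / ((c / s) ^ 2 / 2) := by gcongr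
      _ = _ := by field_simp
  calc _ ≤ (√(δ⁻¹ ^ 3) * √l * (s ^ 2)⁻¹ * (√(1 - s))⁻¹) * (exp c * 2 / c ^ 2 * s ^ 2) := by
        gcongr
    _ = _ := by field_simp

lemma integrableOn_inv_sqrt : IntegrableOn (fun s : ℝ => (√(1 - s))⁻¹) (Set.Ioo 0 1) := by
  have h := (intervalIntegral.intervalIntegrable_rpow' (a := 0) (b := 1)
    (show (-1 : ℝ) < -(1 / 2) by norm_num)).comp_sub_left 1
  simp only [sub_zero, sub_self] at h
  have h2 := (intervalIntegrable_iff_integrableOn_Ioo_of_le zero_le_one).1 h.symm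
  refine h2.congr_fun (fun s hs => ?_) measurableSet_Ioo
  simp only
  rw [Real.rpow_neg (by linarith [hs.2]), Real.sqrt_eq_rpow]

/-- Pointwise domination of the integrand, uniform in `t` and `x`. -/
lemma integrand_bound (β δ : ℝ) (hβ : 0 < β) (hδ : 0 < δ) :
    ∃ C > 0, ∀ l > 1, ∀ t x s : ℝ, t ∈ Set.Icc δ 2 → x ∈ Set.Icc δ δ⁻¹ →
      s ∈ Set.Ioo (0 : ℝ) 1 →
      √(l * x ^ 2 / (2 * π * t * s ^ 3 * (1 - s))) * exp (l * Vfun β s t x)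
        ≤ C * √l * exp ((l - 1) * Vfun β (min (x / (√(2 * β) * t)) 1) t x)
          * (√(1 - s))⁻¹ := by
  obtain ⟨C, hC, h⟩ := prefactor_bound β δ hβ hδ
  refine ⟨C, hC, fun l hl t x s ht hx hs => ?_⟩
  have h1 := h l (by linarith) t x s ht hx hs
  have h2 := Vfun_le_max β s t x hβ hs.1 hs.2.le (hδ.trans_le ht.1) (hδ.trans_le hx.1)
  set Vm := Vfun β (min (x / (√(2 * β) * t)) 1) t x
  have h3 : exp ((l - 1) * Vfun β s t x) ≤ exp ((l - 1) * Vm) :=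
    exp_le_exp.2 (mul_le_mul_of_nonneg_left h2 (by linarith))
  have e : exp (l * Vfun β s t x) = exp (Vfun β s t x) * exp ((l - 1) * Vfun β s t x) := by
    rw [← exp_add]; congr 1; ring
  rw [e, ← mul_assoc]
  calc _ ≤ (C * √l * (√(1 - s))⁻¹) * exp ((l - 1) * Vm) := by gcongr
    _ = _ := by ring

lemma integrand_integrable (β δ : ℝ) (hβ : 0 < β) (hδ : 0 < δ) (l t x : ℝ) (hl : 1 < l)
    (ht : t ∈ Set.Icc δ 2) (hx : x ∈ Set.Icc δ δ⁻¹) :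
    IntegrableOn (fun s => √(l * x ^ 2 / (2 * π * t * s ^ 3 * (1 - s))) *
      exp (l * Vfun β s t x)) (Set.Ioo 0 1) := by
  obtain ⟨C, hC, h⟩ := integrand_bound β δ hβ hδ
  refine Integrable.mono' (integrableOn_inv_sqrt.const_mul
    (C * √l * exp ((l - 1) * Vfun β (min (x / (√(2 * β) * t)) 1) t x))) ?_ ?_
  · refine Measurable.aestronglyMeasurable ?_
    unfold Vfun
    fun_prop
  · refine (ae_restrict_iff' measurableSet_Ioo).2 (Eventually.of_forall fun s hs => ?_)
    rw [Real.norm_of_nonneg (by positivity)]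
    exact h l hl t x s ht hx hs

lemma integral_upper (β δ : ℝ) (hβ : 0 < β) (hδ : 0 < δ) :
    ∃ D > 0, ∀ l > 1, ∀ t x : ℝ, t ∈ Set.Icc δ 2 → x ∈ Set.Icc δ δ⁻¹ →
      ∫ s in Set.Ioo (0 : ℝ) 1, √(l * x ^ 2 / (2 * π * t * s ^ 3 * (1 - s))) *
        exp (l * Vfun β s t x)
        ≤ D * l * exp (l * Vfun β (min (x / (√(2 * β) * t)) 1) t x) := by
  obtain ⟨C, hC, h⟩ := integrand_bound β δ hβ hδ
  set J := ∫ s in Set.Ioo (0 : ℝ) 1, (√(1 - s))⁻¹ with hJ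
  have hJ0 : 0 ≤ J := by rw [hJ]; exact integral_nonneg fun s => by positivity
  refine ⟨C * (J + 1) * exp (2 * β), by positivity, fun l hl t x ht hx => ?_⟩
  have ht0 := hδ.trans_le ht.1
  have hx0 := hδ.trans_le hx.1
  -- `V(s*) ≥ V(1) = -β t ≥ -2 β`, so the missing factor `exp V(s*)` costs only a constant.
  have hV : -(2 * β) ≤ Vfun β (min (x / (√(2 * β) * t)) 1) t x := by
    refine le_trans ?_ (Vfun_le_max β 1 t x hβ one_pos le_rfl ht0 hx0)
    have : Vfun β 1 t x = -β * t := by simp [Vfun]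
    rw [this]; nlinarith [ht.2]
  have h0 := setIntegral_mono_on (integrand_integrable β δ hβ hδ l t x hl ht hx)
    (integrableOn_inv_sqrt.const_mul
      (C * √l * exp ((l - 1) * Vfun β (min (x / (√(2 * β) * t)) 1) t x)))
    measurableSet_Ioo (fun s hs => h l hl t x s ht hx hs)
  rw [integral_const_mul, ← hJ] at h0
  set Vm := Vfun β (min (x / (√(2 * β) * t)) 1) t x
  have hsl : √l ≤ l := by rw [Real.sqrt_le_left (by linarith)]; nlinarith
  have he : exp ((l - 1) * Vm) ≤ exp (2 * β) * exp (l * Vm) := by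
    rw [← exp_add]; apply exp_le_exp.2; linarith
  calc _ ≤ C * √l * exp ((l - 1) * Vm) * J := h0
    _ ≤ C * l * (exp (2 * β) * exp (l * Vm)) * (J + 1) := by gcongr; linarith
    _ = _ := by ring

lemma integral_lower (β δ : ℝ) (hβ : 0 < β) (hδ : 0 < δ) :
    ∃ D > 0, ∃ M ≥ 1, ∀ l > M, ∀ t x : ℝ, t ∈ Set.Icc δ 2 → x ∈ Set.Icc δ δ⁻¹ →
      D / l * exp (l * Vfun β (min (x / (√(2 * β) * t)) 1) t x)
      ≤ ∫ s in Set.Ioo (0 : ℝ) 1, √(l * x ^ 2 / (2 * π * t * s ^ 3 * (1 - s))) *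
        exp (l * Vfun β s t x) := by
  have ha : 0 < √(2 * β) := by positivity
  -- `2 h` is a lower bound for `s*`, and `L` a Lipschitz constant for `V` on `[h, s*]`.
  set h := min (δ / (√(2 * β) * 2)) 1 / 2 with hh
  have hh0 : 0 < h := by positivity
  set L := δ⁻¹ ^ 2 / (2 * δ * h * h) with hL
  have hL0 : 0 < L := by positivity
  refine ⟨h * exp (-(L * h)), by positivity, max 1 (4 * π / δ ^ 2), le_max_left _ _, ?_⟩
  intro l hl t x ht hx
  have ht0 := hδ.trans_le ht.1
  have hx0 := hδ.trans_le hx.1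
  have hl1 : 1 < l := (le_max_left _ _).trans_lt hl
  have hl2 : 4 * π / δ ^ 2 < l := (le_max_right _ _).trans_lt hl
  have hl0 : 0 < l := by linarith
  have hI := integrand_integrable β δ hβ hδ l t x hl1 ht hx
  have hu : 2 * h ≤ min (x / (√(2 * β) * t)) 1 := by
    have : 2 * h = min (δ / (√(2 * β) * 2)) 1 := by rw [hh]; ring
    rw [this]
    have h1 := hx.1
    have h2 := ht.2
    gcongr
  have hu1 : min (x / (√(2 * β) * t)) 1 ≤ 1 := min_le_right _ _
  set u := min (x / (√(2 * β) * t)) 1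
  have hhl : h / l ≤ h := div_le_self hh0.le hl1.le
  have hhl0 : 0 < h / l := by positivity
  have hsub : Set.Ioo (u - h / l) u ⊆ Set.Ioo 0 1 := fun s hs =>
    ⟨by linarith [hs.1], by linarith [hs.2]⟩
  have hpt : ∀ s ∈ Set.Ioo (u - h / l) u, exp (l * Vfun β u t x - L * h) ≤
      √(l * x ^ 2 / (2 * π * t * s ^ 3 * (1 - s))) * exp (l * Vfun β s t x) := by
    intro s hs
    obtain ⟨hs0, hs1⟩ := hsub hs
    have hsh : h ≤ s := by linarith [hs.1]
    have h1s : 0 < 1 - s := by linarith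
    have hp : 1 ≤ √(l * x ^ 2 / (2 * π * t * s ^ 3 * (1 - s))) := by
      rw [Real.one_le_sqrt, one_le_div (by positivity)]
      calc 2 * π * t * s ^ 3 * (1 - s) ≤ 2 * π * 2 * 1 * 1 := by
            have h1 := ht.2
            have h2 : s ^ 3 ≤ 1 := pow_le_one₀ hs0.le hs1.le
            have h3 : 1 - s ≤ 1 := by linarith
            gcongr
        _ = 4 * π / δ ^ 2 * δ ^ 2 := by field_simp; norm_num
        _ ≤ l * x ^ 2 := by
            have h1 := hx.1
            gcongr
    have hV : l * Vfun β u t x - L * h ≤ l * Vfun β s t x := by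
      have key := Vfun_sub β s u t x hs0 (by linarith) ht0
      have hq : x ^ 2 / (2 * t * s * u) ≤ L := by
        rw [hL]
        have h1 := hx.2
        have h2 := ht.1
        have h3 : h ≤ u := by linarith
        gcongr
      have h4 : Vfun β u t x - Vfun β s t x ≤ h / l * L := by
        have e : Vfun β u t x - Vfun β s t x
            = (u - s) * (x ^ 2 / (2 * t * s * u) - β * t) := by rw [key]; ring
        have hus : 0 ≤ u - s := by linarith [hs.2]
        have hbt : 0 < β * t := by positivity
        calc _ = _ := e
          _ ≤ (u - s) * L := by gcongr; linarith
          _ ≤ h / l * L := by gcongr; linarith [hs.1]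
      have h5 := mul_le_mul_of_nonneg_left h4 hl0.le
      have h6 : l * (h / l * L) = L * h := by field_simp
      linarith
    calc exp (l * Vfun β u t x - L * h) ≤ 1 * exp (l * Vfun β s t x) := by
          rw [one_mul]; exact exp_le_exp.2 hV
      _ ≤ _ := by gcongr
  calc h * exp (-(L * h)) / l * exp (l * Vfun β u t x)
      = ∫ s in Set.Ioo (u - h / l) u, exp (l * Vfun β u t x - L * h) := by
        rw [setIntegral_const]
        simp only [measureReal_def, Real.volume_Ioo, smul_eq_mul]
        rw [ENNReal.toReal_ofReal (by linarith), sub_eq_add_neg (l * _), exp_add]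
        ring
    _ ≤ ∫ s in Set.Ioo (u - h / l) u, √(l * x ^ 2 / (2 * π * t * s ^ 3 * (1 - s))) *
        exp (l * Vfun β s t x) :=
        setIntegral_mono_on (by simp) (hI.mono_set hsub) measurableSet_Ioo hpt
    _ ≤ _ := by
        refine setIntegral_mono_set hI (Eventually.of_forall fun s => ?_)
          (LE.le.eventuallyLE hsub)
        simp only [Pi.zero_apply]
        positivity

/-- Laplace asymptotics of the exponentially weighted hitting-time density,
uniformly over `(t,x) ∈ [δ,2] × [δ,δ⁻¹]`. -/
theorem laplace_asymptotics_hitting_time (β δ : ℝ) (hβ : 0 < β)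
    (hδ : δ ∈ Set.Ioo (0 : ℝ) 1) :
    ∀ ζ > (0 : ℝ), ∃ M : ℝ, ∀ l > M, ∀ t x : ℝ,
      t ∈ Set.Icc δ 2 → x ∈ Set.Icc δ δ⁻¹ →
      |l⁻¹ * Real.log (∫ s in Set.Ioo (0 : ℝ) 1,
            Real.sqrt (l * x ^ 2 / (2 * Real.pi * t * s ^ 3 * (1 - s))) *
              Real.exp (l * Vfun β s t x)) -
          Vfun β (min (x / (Real.sqrt (2 * β) * t)) 1) t x| < ζ := by
  intro ζ hζ
  obtain ⟨D, hD, hup⟩ := integral_upper β δ hβ hδ.1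
  obtain ⟨E, hE, M₀, hM₀, hlow⟩ := integral_lower β δ hβ hδ.1
  have hlim : ∀ K : ℝ, ∀ᶠ l : ℝ in atTop, K + log l < ζ * l := by
    intro K
    have h1 := (Real.isLittleO_log_id_atTop.add
      (Asymptotics.isLittleO_const_id_atTop K)).bound (half_pos hζ)
    filter_upwards [h1, eventually_gt_atTop 0] with l hl hl0
    simp only [id, Real.norm_eq_abs, abs_of_pos hl0] at hl
    have := le_abs_self (log l + K)
    nlinarith
  obtain ⟨M₁, h₁⟩ := eventually_atTop.1 ((hlim (log D)).and (hlim (-log E)))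
  refine ⟨max M₀ M₁, fun l hl t x ht hx => ?_⟩
  have hlM : M₀ < l := (le_max_left _ _).trans_lt hl
  have hl0 : 0 < l := by linarith
  obtain ⟨hd, he⟩ := h₁ l ((le_max_right _ _).trans hl.le)
  have hu := hup l (by linarith) t x ht hx
  have hw := hlow l hlM t x ht hx
  set I := ∫ s in Set.Ioo (0 : ℝ) 1, √(l * x ^ 2 / (2 * π * t * s ^ 3 * (1 - s))) *
    exp (l * Vfun β s t x)
  set Vm := Vfun β (min (x / (√(2 * β) * t)) 1) t x
  have hI : 0 < I := lt_of_lt_of_le (by positivity) hw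
  have h2 := Real.log_le_log hI hu
  have h3 := Real.log_le_log (by positivity) hw
  rw [Real.log_mul (by positivity) (by positivity), Real.log_exp,
    Real.log_mul hD.ne' hl0.ne'] at h2
  rw [Real.log_mul (by positivity) (by positivity), Real.log_exp,
    Real.log_div hE.ne' hl0.ne'] at h3
  have e : l⁻¹ * log I - Vm = (log I - l * Vm) / l := by field_simp
  rw [e, abs_lt, lt_div_iff₀ hl0, div_lt_iff₀ hl0]
  constructor <;> linarith
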